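/- For initial data u^{in} ∈ V_d and forcing f ∈ V_d with d ≥ 1, there exists T > 0 such that the inviscid sabra shell model du/dt + B(u,u) = f, u(0) = u^{in}, has a unique solution u ∈ C¹((−T, T), V_d). -/

import Mathlib

open Complex

/-- Wavenumbers of the sabra shell model: `k n = k0 * λ^n`. -/
noncomputable def kk (k0 lam : ℝ) (n : ℤ) : ℝ := k0 * lam ^ n

/-- Nonlinear term of the sabra shell model. -/
noncomputable def sB (a b c k0 lam : ℝ) (u : ℤ → ℂ) (n : ℤ) : ℂ :=
  -Complex.I * ((a : ℂ) * (kk k0 lam (n + 1) : ℝ) * u (n + 2) * (starRingEnd ℂ) (u (n + 1))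
    + (b : ℂ) * (kk k0 lam n : ℝ) * u (n + 1) * (starRingEnd ℂ) (u (n - 1))
    - (c : ℂ) * (kk k0 lam (n - 1) : ℝ) * u (n - 1) * u (n - 2))

/-- Membership in `V_r`. -/
def InV (k0 lam r : ℝ) (u : ℤ → ℂ) : Prop :=
  (∀ n : ℤ, n ≤ 0 → u n = 0) ∧
  Summable fun n : ℕ => (kk k0 lam ((n : ℤ) + 1)) ^ (2 * r) * ‖u ((n : ℤ) + 1)‖ ^ 2

/-- A `C¹((-T,T), V_d)` solution of `du/dt + B(u,u) = f`, `u(0) = u^{in}`: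
componentwise ODE, `u(t) ∈ V_d`, and continuity in the `V_d` norm of `u` and of its
derivative `f - B(u,u)` on `(-T,T)`. -/
def IsC1Solution (a b c k0 lam d T : ℝ) (uin f : ℤ → ℂ) (u : ℝ → ℤ → ℂ) : Prop :=
  (∀ n : ℤ, u 0 n = uin n) ∧
  (∀ t : ℝ, ∀ n : ℤ, n ≤ 0 → u t n = 0) ∧
  (∀ t ∈ Set.Ioo (-T) T, InV k0 lam d (u t) ∧
    ∀ n : ℤ, 1 ≤ n → HasDerivAt (fun s => u s n) (f n - sB a b c k0 lam (u t) n) t) ∧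
  ContinuousOn (fun t => ∑' n : ℕ,
    (kk k0 lam ((n : ℤ) + 1)) ^ (2 * d) * ‖u t ((n : ℤ) + 1)‖ ^ 2) (Set.Ioo (-T) T) ∧
  ContinuousOn (fun t => ∑' n : ℕ,
    (kk k0 lam ((n : ℤ) + 1)) ^ (2 * d) *
      ‖f ((n : ℤ) + 1) - sB a b c k0 lam (u t) ((n : ℤ) + 1)‖ ^ 2) (Set.Ioo (-T) T)

/-!
In the weighted unknowns `x_n = k_n^d u_n` the space `V_d` becomes `ℓ²`. A product of the modes
`n + p` and `n + q` entering the equation of the mode `n` acquires the coefficient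
`const · k_n^(1 - d)`, which is bounded because `d ≥ 1`. Hence `f - B(u, u)` becomes a continuous
quadratic, in particular `C¹`, vector field `F` on `ℓ²`, and existence is the Picard–Lindelöf
theorem.

For uniqueness, a componentwise solution has to be recognised as an integral curve of `F` in `ℓ²`.
The norm of its componentwise derivative is continuous, hence locally bounded, so the mean value
inequality on finite truncations makes the curve locally Lipschitz. Now `F` along the curve is
continuous, and the same inequality applied to `x(r) - r F(x(t))` near `r = t` shows that the curve
is differentiable in norm. Two integral curves of a locally Lipschitz field with the same initial
value coincide.
-/

open Filter Set Topology
open scoped ENNReal NNReal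

section MeanValue

variable {ι : Type*} {E : ι → Type*} [∀ i, NormedAddCommGroup (E i)] {p : ℝ≥0∞}
  [Fact (1 ≤ p)]

lemma norm_sum_lp_single_le [DecidableEq ι] (hp : p ≠ ∞) (x : lp E p) (s : Finset ι) :
    ‖∑ i ∈ s, lp.single p i (x i)‖ ≤ ‖x‖ := by
  have hp' : 0 < p.toReal := ENNReal.toReal_pos (zero_lt_one.trans_le Fact.out).ne' hp
  rw [← Real.rpow_le_rpow_iff (norm_nonneg _) (norm_nonneg _) hp', lp.norm_sum_single hp']
  exact lp.sum_rpow_le_norm_rpow hp' x s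

variable [∀ i, NormedSpace ℝ (E i)]

lemma norm_image_sub_le_of_hasDerivAt_apply (hp : p ≠ ∞) {x y : ℝ → lp E p} {s : Set ℝ} {C : ℝ}
    (hx : ∀ t ∈ s, ∀ i, HasDerivAt (fun r => x r i) (y t i) t) (hy : ∀ t ∈ s, ‖y t‖ ≤ C)
    (hs : Convex ℝ s) {t₀ t₁ : ℝ} (ht₀ : t₀ ∈ s) (ht₁ : t₁ ∈ s) :
    ‖x t₁ - x t₀‖ ≤ C * ‖t₁ - t₀‖ := by
  classical
  have truncated (F : Finset ι) :
      ‖∑ i ∈ F, lp.single p i (x t₁ i) - ∑ i ∈ F, lp.single p i (x t₀ i)‖ ≤ C * ‖t₁ - t₀‖ := by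
    refine hs.norm_image_sub_le_of_norm_hasDerivWithin_le
      (f := fun t => ∑ i ∈ F, lp.single p i (x t i))
      (f' := fun t => ∑ i ∈ F, lp.single p i (y t i))
      (fun t ht => HasDerivAt.hasDerivWithinAt (.fun_sum fun i _ => ?_))
      (fun t ht => (norm_sum_lp_single_le hp _ F).trans (hy t ht)) ht₀ ht₁
    exact (lp.singleContinuousLinearMap ℝ E p i).hasFDerivAt.comp_hasDerivAt t (hx t ht i)
  have limit := (lp.hasSum_single hp (x t₁)).sub (lp.hasSum_single hp (x t₀))
  refine le_of_tendsto (Tendsto.norm limit) (Eventually.of_forall fun F => ?_)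
  simpa only [Finset.sum_sub_distrib] using truncated F

lemma continuousOn_of_hasDerivAt_apply (hp : p ≠ ∞) {x y : ℝ → lp E p} {s : Set ℝ}
    (hs : IsOpen s) (hx : ∀ t ∈ s, ∀ i, HasDerivAt (fun r => x r i) (y t i) t)
    (hy : ContinuousOn (fun t => ‖y t‖) s) : ContinuousOn x s := by
  intro t ht
  have bounded : ∀ᶠ r in 𝓝 t, r ∈ s ∧ ‖y r‖ < ‖y t‖ + 1 :=
    (hs.eventually_mem ht).and
      ((hy.continuousAt (hs.mem_nhds ht)).eventually_lt_const (lt_add_one _))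
  obtain ⟨ε, hε, hball⟩ := Metric.eventually_nhds_iff_ball.mp bounded
  refine (continuousAt_of_locally_lipschitz hε (‖y t‖ + 1) fun r hr => ?_).continuousWithinAt
  rw [dist_eq_norm, dist_eq_norm]
  exact norm_image_sub_le_of_hasDerivAt_apply hp (fun q hq => hx q (hball q hq).1)
    (fun q hq => (hball q hq).2.le) (convex_ball t ε) (Metric.mem_ball_self hε) hr

lemma hasDerivAt_of_hasDerivAt_apply (hp : p ≠ ∞) {x y : ℝ → lp E p} {t : ℝ}
    (hx : ∀ᶠ r in 𝓝 t, ∀ i, HasDerivAt (fun q => x q i) (y r i) r)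
    (hy : ContinuousAt y t) : HasDerivAt x (y t) t := by
  rw [hasDerivAt_iff_isLittleO, Asymptotics.isLittleO_iff]
  intro δ hδ
  have close : ∀ᶠ r in 𝓝 t, ‖y r - y t‖ ≤ δ :=
    (Metric.continuousAt_iff'.mp hy δ hδ).mono fun r hr => by
      simpa only [dist_eq_norm] using hr.le
  obtain ⟨ε, hε, hball⟩ := Metric.eventually_nhds_iff_ball.mp (hx.and close)
  filter_upwards [Metric.ball_mem_nhds t hε] with r hr
  have key := norm_image_sub_le_of_hasDerivAt_apply hp
    (x := fun q => x q - q • y t) (y := fun q => y q - y t)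
    (fun q hq i => ((hball q hq).1 i).sub (by
      simpa using (hasDerivAt_id q).smul_const (y t i)))
    (fun q hq => (hball q hq).2) (convex_ball t ε) (Metric.mem_ball_self hε) hr
  rwa [sub_sub_sub_comm, ← sub_smul] at key

end MeanValue

section Uniqueness

variable {E : Type*} [NormedAddCommGroup E] [NormedSpace ℝ E]

lemma eqOn_Ioo_of_hasDerivAt_of_locallyLipschitz {F : E → E} (hF : LocallyLipschitz F)
    {x y : ℝ → E} {a b t₀ : ℝ} (ht₀ : t₀ ∈ Ioo a b)
    (hx : ∀ t ∈ Ioo a b, HasDerivAt x (F (x t)) t)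
    (hy : ∀ t ∈ Ioo a b, HasDerivAt y (F (y t)) t) (h₀ : x t₀ = y t₀) :
    EqOn x y (Ioo a b) := by
  intro t ht
  obtain ⟨a', ha', ha't⟩ := exists_between (lt_min ht₀.1 ht.1)
  obtain ⟨b', hb't, hb'⟩ := exists_between (max_lt ht₀.2 ht.2)
  rw [lt_min_iff] at ha't
  rw [max_lt_iff] at hb't
  have hsub : Icc a' b' ⊆ Ioo a b := Icc_subset_Ioo ha' hb'
  have compact : IsCompact (x '' Icc a' b' ∪ y '' Icc a' b') :=
    (isCompact_Icc.image_of_continuousOn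
      (HasDerivAt.continuousOn fun r hr => hx r (hsub hr))).union
      (isCompact_Icc.image_of_continuousOn (HasDerivAt.continuousOn fun r hr => hy r (hsub hr)))
  obtain ⟨K, hK⟩ := hF.locallyLipschitzOn.exists_lipschitzOnWith_of_compact compact
  refine ODE_solution_unique_of_mem_Ioo (v := fun _ => F) (s := fun _ => _) (fun _ _ => hK)
    ⟨ha't.1, hb't.1⟩ (fun r hr => ?_) (fun r hr => ?_) h₀ ⟨ha't.2, hb't.2⟩
  · have hr' := Ioo_subset_Icc_self hr
    exact ⟨hx r (hsub hr'), .inl (mem_image_of_mem x hr')⟩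
  · have hr' := Ioo_subset_Icc_self hr
    exact ⟨hy r (hsub hr'), .inr (mem_image_of_mem y hr')⟩

end Uniqueness

section CoordinatewiseMaps

variable {ι 𝕜 : Type*} {p : ℝ≥0∞} [Fact (1 ≤ p)] {E : ι → Type*} [∀ i, NormedAddCommGroup (E i)]

/-- The contractive inclusion of `ℓ^p` into `ℓ^∞`. -/
noncomputable def lpToTop [NontriviallyNormedField 𝕜] [∀ i, NormedSpace 𝕜 (E i)] :
    lp E p →L[𝕜] lp E ∞ :=
  (lp.linearMapOfLE 𝕜 E le_top).mkContinuous 1 fun x => by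
    rw [one_mul]
    exact lp.norm_le_of_forall_le (norm_nonneg x)
      (lp.norm_apply_le_norm (zero_lt_one.trans_le Fact.out).ne' x)

variable [RCLike 𝕜] [∀ i, NormedSpace 𝕜 (E i)] {F G : ι → Type*}
  [∀ i, NormedAddCommGroup (F i)] [∀ i, NormedSpace 𝕜 (F i)]
  [∀ i, NormedAddCommGroup (G i)] [∀ i, NormedSpace 𝕜 (G i)]

/-- The bounded bilinear map `ℓ^p × ℓ^p → ℓ^p` acting on the `i`-th coordinates by `B i`, for a
uniformly bounded family `B`. -/
noncomputable def lpBilin (p : ℝ≥0∞) [Fact (1 ≤ p)] (B : ∀ i, E i →L[𝕜] F i →L[𝕜] G i)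
    {K : ℝ≥0} (hB : ∀ i, ‖B i‖ ≤ K) : lp E p →L[𝕜] lp F p →L[𝕜] lp G p :=
  lp.holderL p B hB ∘L lpToTop

lemma lpBilin_apply (B : ∀ i, E i →L[𝕜] F i →L[𝕜] G i) {K : ℝ≥0} (hB : ∀ i, ‖B i‖ ≤ K)
    (x : lp E p) (y : lp F p) (i : ι) : lpBilin p B hB x y i = B i (x i) (y i) := rfl

end CoordinatewiseMaps

section ExtendComp

variable {ι ι' κ F : Type*} [NormedAddCommGroup F] {p : ℝ≥0∞}

lemma hasSum_norm_rpow_extend_zero (hp : 0 < p.toReal) (i : ι ↪ κ) (x : lp (fun _ : ι => F) p) :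
    HasSum (fun k => ‖Function.extend i x 0 k‖ ^ p.toReal) (‖x‖ ^ p.toReal) := by
  have key : (fun k => ‖Function.extend i x 0 k‖ ^ p.toReal) =
      Function.extend i (fun j => ‖x j‖ ^ p.toReal) 0 := by
    funext k
    rw [Function.apply_extend (fun v : F => ‖v‖ ^ p.toReal)]
    congr 1
    funext k
    simp [Real.zero_rpow hp.ne']
  rw [key, hasSum_extend_zero i.injective]
  exact lp.hasSum_norm hp x

variable [Fact (1 ≤ p)]

lemma norm_extend_zero_le (i : ι ↪ κ) (x : lp (fun _ : ι => F) p) (k : κ) :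
    ‖Function.extend i x 0 k‖ ≤ ‖x‖ := by
  by_cases hk : ∃ j, i j = k
  · obtain ⟨j, rfl⟩ := hk
    rw [i.injective.extend_apply]
    exact lp.norm_apply_le_norm (zero_lt_one.trans_le Fact.out).ne' x j
  · rw [Function.extend_apply' _ _ _ hk, Pi.zero_apply, norm_zero]
    exact norm_nonneg x

lemma memℓp_extend_zero_comp (i : ι ↪ κ) (e : ι' ↪ κ) (x : lp (fun _ : ι => F) p) :
    Memℓp (Function.extend i x 0 ∘ e) p := by
  obtain rfl | hp := p.dichotomy
  · exact memℓp_infty ⟨‖x‖, forall_mem_range.mpr fun k => norm_extend_zero_le i x (e k)⟩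
  · have hsum := hasSum_norm_rpow_extend_zero (zero_lt_one.trans_le hp) i x
    exact memℓp_gen (hsum.summable.comp_injective e.injective)

lemma norm_extend_zero_comp_le (i : ι ↪ κ) (e : ι' ↪ κ) (x : lp (fun _ : ι => F) p) :
    ‖(⟨_, memℓp_extend_zero_comp i e x⟩ : lp (fun _ : ι' => F) p)‖ ≤ ‖x‖ := by
  obtain rfl | hp := p.dichotomy
  · exact lp.norm_le_of_forall_le (norm_nonneg x) fun k => norm_extend_zero_le i x (e k)
  · have hp' := zero_lt_one.trans_le hp
    have hsum := hasSum_norm_rpow_extend_zero hp' i x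
    refine lp.norm_le_of_tsum_le hp' (norm_nonneg x) (hsum.tsum_eq ▸ ?_)
    exact tsum_comp_le_tsum_of_inj hsum.summable (fun k => by positivity) e.injective

/-- The contraction `ℓ^p(ι) → ℓ^p(ι')` extending a sequence by zero along `i : ι ↪ κ` and then
restricting it along `e : ι' ↪ κ`. -/
noncomputable def lpExtendComp (𝕜 : Type*) [NontriviallyNormedField 𝕜] [NormedSpace 𝕜 F]
    (p : ℝ≥0∞) [Fact (1 ≤ p)] (i : ι ↪ κ) (e : ι' ↪ κ) :
    lp (fun _ : ι => F) p →L[𝕜] lp (fun _ : ι' => F) p :=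
  LinearMap.mkContinuous
    { toFun x := ⟨_, memℓp_extend_zero_comp i e x⟩
      map_add' x y := by
        ext k
        have h := congrFun (Function.extend_add i x y 0 0) (e k)
        rwa [add_zero] at h
      map_smul' r x := by
        ext k
        simpa using congrFun (Function.extend_smul r i x 0) (e k) }
    1 fun x => (norm_extend_zero_comp_le i e x).trans_eq (one_mul _).symm

lemma lpExtendComp_apply {𝕜 : Type*} [NontriviallyNormedField 𝕜] [NormedSpace 𝕜 F]
    (i : ι ↪ κ) (e : ι' ↪ κ) (x : lp (fun _ : ι => F) p) (k : ι') :
    lpExtendComp 𝕜 p i e x k = Function.extend i x 0 (e k) := rfl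

end ExtendComp

section WeightedCoordinates

/-- The real Banach space `ℓ²`, onto which `weightedCoord` maps `V_d` isometrically. -/
abbrev SeqL2 : Type := lp (fun _ : ℕ => ℂ) 2

/-- The weight `k_n^d` of the space `V_d`. -/
noncomputable def modeWeight (k0 lam d : ℝ) (n : ℤ) : ℝ := kk k0 lam n ^ d

/-- The labelling of the active modes `1, 2, …` by `ℕ`: the `n`-th coordinate of a sequence
in `ℓ²` belongs to the mode `n + 1`. -/
def activeMode : ℕ ↪ ℤ := Nat.castEmbedding.trans (addRightEmbedding 1)

/-- The weighted unknowns `k_n^d u_n`, `n ≥ 1`, of a shell sequence `u`. -/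
noncomputable def weightedCoord (k0 lam d : ℝ) (u : ℤ → ℂ) (n : ℕ) : ℂ :=
  modeWeight k0 lam d (n + 1) • u (n + 1)

/-- The shell sequence, supported on the modes `n ≥ 1`, with given weighted unknowns. -/
noncomputable def ofWeightedCoord (k0 lam d : ℝ) (x : ℕ → ℂ) (m : ℤ) : ℂ :=
  (modeWeight k0 lam d m)⁻¹ • Function.extend activeMode x 0 m

variable {k0 lam d : ℝ}

lemma kk_pos (hk0 : 0 < k0) (hlam : 0 < lam) (n : ℤ) : 0 < kk k0 lam n :=
  mul_pos hk0 (zpow_pos hlam n)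

lemma le_kk (hk0 : 0 ≤ k0) (hlam : 1 ≤ lam) {n : ℤ} (hn : 0 ≤ n) : k0 ≤ kk k0 lam n :=
  le_mul_of_one_le_right hk0 (one_le_zpow₀ hlam hn)

lemma kk_add (hlam : lam ≠ 0) (n p : ℤ) : kk k0 lam (n + p) = kk k0 lam n * lam ^ p := by
  rw [kk, zpow_add₀ hlam, ← mul_assoc, kk]

lemma modeWeight_pos (hk0 : 0 < k0) (hlam : 0 < lam) (n : ℤ) : 0 < modeWeight k0 lam d n :=
  Real.rpow_pos_of_pos (kk_pos hk0 hlam n) d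

lemma modeWeight_add (hk0 : 0 < k0) (hlam : 0 < lam) (n p : ℤ) :
    modeWeight k0 lam d (n + p) = modeWeight k0 lam d n * (lam ^ p) ^ d := by
  rw [modeWeight, kk_add hlam.ne', Real.mul_rpow (kk_pos hk0 hlam n).le (zpow_pos hlam p).le,
    modeWeight]

lemma kk_rpow_mul_norm_sq (hk0 : 0 < k0) (hlam : 0 < lam) (u : ℤ → ℂ) (n : ℕ) :
    kk k0 lam (n + 1) ^ (2 * d) * ‖u (n + 1)‖ ^ 2 = ‖weightedCoord k0 lam d u n‖ ^ 2 := by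
  rw [weightedCoord, norm_smul, Real.norm_of_nonneg (modeWeight_pos hk0 hlam _).le, mul_pow,
    modeWeight, mul_comm 2 d, Real.rpow_mul (kk_pos hk0 hlam _).le, Real.rpow_two]

lemma inV_iff (hk0 : 0 < k0) (hlam : 0 < lam) {u : ℤ → ℂ} :
    InV k0 lam d u ↔ (∀ n ≤ 0, u n = 0) ∧ Memℓp (weightedCoord k0 lam d u) 2 := by
  simp only [InV, kk_rpow_mul_norm_sq hk0 hlam, memℓp_gen_iff (p := 2) (by norm_num),
    ENNReal.toReal_ofNat, Real.rpow_two]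

lemma tsum_kk_rpow_eq_norm_sq (hk0 : 0 < k0) (hlam : 0 < lam) {u : ℤ → ℂ} {x : SeqL2}
    (hx : x = weightedCoord k0 lam d u) :
    ∑' n : ℕ, kk k0 lam ((n : ℤ) + 1) ^ (2 * d) * ‖u ((n : ℤ) + 1)‖ ^ 2 = ‖x‖ ^ 2 := by
  have h := (lp.hasSum_norm (p := 2) (by norm_num) x).tsum_eq
  simp only [ENNReal.toReal_ofNat, Real.rpow_two] at h
  simp only [← h, kk_rpow_mul_norm_sq hk0 hlam, hx]

lemma ofWeightedCoord_of_nonpos (x : ℕ → ℂ) {m : ℤ} (hm : m ≤ 0) :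
    ofWeightedCoord k0 lam d x m = 0 := by
  have inactive : ¬∃ n, activeMode n = m := by
    rintro ⟨n, rfl⟩
    exact hm.not_gt n.cast_add_one_pos
  rw [ofWeightedCoord, Function.extend_apply' _ _ _ inactive, Pi.zero_apply, smul_zero]

lemma ofWeightedCoord_add_one (x : ℕ → ℂ) (n : ℕ) :
    ofWeightedCoord k0 lam d x (n + 1) = (modeWeight k0 lam d (n + 1))⁻¹ • x n :=
  congrArg _ (activeMode.injective.extend_apply x 0 n)

lemma weightedCoord_ofWeightedCoord (hk0 : 0 < k0) (hlam : 0 < lam) (x : ℕ → ℂ) :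
    weightedCoord k0 lam d (ofWeightedCoord k0 lam d x) = x := by
  funext n
  rw [weightedCoord, ofWeightedCoord_add_one, smul_inv_smul₀ (modeWeight_pos hk0 hlam _).ne']

lemma ofWeightedCoord_weightedCoord (hk0 : 0 < k0) (hlam : 0 < lam) {u : ℤ → ℂ}
    (hu : ∀ n ≤ 0, u n = 0) : ofWeightedCoord k0 lam d (weightedCoord k0 lam d u) = u := by
  funext m
  obtain hm | hm := le_or_gt m 0
  · rw [ofWeightedCoord_of_nonpos _ hm, hu m hm]
  · obtain ⟨n, rfl⟩ : ∃ n : ℕ, m = n + 1 := ⟨(m - 1).toNat, by omega⟩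
    rw [ofWeightedCoord_add_one, weightedCoord,
      inv_smul_smul₀ (modeWeight_pos hk0 hlam _).ne']

lemma ofWeightedCoord_star (x : ℕ → ℂ) (m : ℤ) :
    ofWeightedCoord k0 lam d (star x) m = star (ofWeightedCoord k0 lam d x m) := by
  have extend_star :
      Function.extend activeMode (star x) 0 m = star (Function.extend activeMode x 0 m) := by
    rw [Function.apply_extend (star : ℂ → ℂ)]
    congr 1
    exact funext fun _ => (star_zero ℂ).symm
  rw [ofWeightedCoord, ofWeightedCoord, extend_star, star_smul, star_trivial (_ : ℝ)]

end WeightedCoordinates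

section VectorField

variable {k0 lam d : ℝ}

/-- The coefficient of the product of the modes `n + p` and `n + q` in the equation of the mode
`n`, with frequency factor `k_{n+j}`, after passing to the weighted unknowns `k_n^d u_n`. -/
noncomputable def triadCoeff (k0 lam d : ℝ) (j p q n : ℤ) : ℝ :=
  kk k0 lam (n + j) * modeWeight k0 lam d n /
    (modeWeight k0 lam d (n + p) * modeWeight k0 lam d (n + q))

lemma triadCoeff_pos (hk0 : 0 < k0) (hlam : 0 < lam) (j p q n : ℤ) :
    0 < triadCoeff k0 lam d j p q n :=
  div_pos (mul_pos (kk_pos hk0 hlam _) (modeWeight_pos hk0 hlam _))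
    (mul_pos (modeWeight_pos hk0 hlam _) (modeWeight_pos hk0 hlam _))

lemma triadCoeff_eq (hk0 : 0 < k0) (hlam : 0 < lam) (j p q n : ℤ) :
    triadCoeff k0 lam d j p q n =
      lam ^ j / ((lam ^ p) ^ d * (lam ^ q) ^ d) * kk k0 lam n ^ (1 - d) := by
  have hw : modeWeight k0 lam d n ≠ 0 := (modeWeight_pos hk0 hlam n).ne'
  rw [triadCoeff, kk_add hlam.ne', modeWeight_add hk0 hlam, modeWeight_add hk0 hlam,
    Real.rpow_sub (kk_pos hk0 hlam n), Real.rpow_one, ← modeWeight]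
  field_simp

lemma exists_triadCoeff_le (hk0 : 0 < k0) (hlam : 1 ≤ lam) (hd : 1 ≤ d) (j p q : ℤ) :
    ∃ K : ℝ≥0, ∀ n, 0 ≤ n → triadCoeff k0 lam d j p q n ≤ K := by
  have hlam₀ : 0 < lam := zero_lt_one.trans_le hlam
  refine ⟨⟨lam ^ j / ((lam ^ p) ^ d * (lam ^ q) ^ d) * k0 ^ (1 - d), by positivity⟩,
    fun n hn => ?_⟩
  rw [triadCoeff_eq hk0 hlam₀]
  exact mul_le_mul_of_nonneg_left
    (Real.rpow_le_rpow_of_nonpos hk0 (le_kk hk0.le hlam hn) (sub_nonpos.mpr hd)) (by positivity)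

lemma triadCoeff_smul_mul (hk0 : 0 < k0) (hlam : 0 < lam) (j p q n : ℤ) (v w : ℂ) :
    triadCoeff k0 lam d j p q n •
        ((modeWeight k0 lam d (n + p) • v) * (modeWeight k0 lam d (n + q) • w)) =
      modeWeight k0 lam d n • (kk k0 lam (n + j) * v * w) := by
  have hp : modeWeight k0 lam d (n + p) ≠ 0 := (modeWeight_pos hk0 hlam _).ne'
  have hq : modeWeight k0 lam d (n + q) ≠ 0 := (modeWeight_pos hk0 hlam _).ne'
  rw [smul_mul_smul_comm, smul_smul, triadCoeff, div_mul_cancel₀ _ (mul_ne_zero hp hq)]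
  simp only [Complex.real_smul, Complex.ofReal_mul]
  ring

lemma exists_weightedTriad (hk0 : 0 < k0) (hlam : 1 ≤ lam) (hd : 1 ≤ d) (j p q : ℤ) :
    ∃ Q : SeqL2 →L[ℝ] SeqL2 →L[ℝ] SeqL2, ∀ x y, Q x y = weightedCoord k0 lam d fun n =>
      kk k0 lam (n + j) *
        ofWeightedCoord k0 lam d x (n + p) * ofWeightedCoord k0 lam d y (n + q) := by
  have hlam₀ : 0 < lam := zero_lt_one.trans_le hlam
  obtain ⟨K, hK⟩ := exists_triadCoeff_le hk0 hlam hd j p q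
  let B (n : ℕ) : ℂ →L[ℝ] ℂ →L[ℝ] ℂ :=
    triadCoeff k0 lam d j p q (n + 1) • ContinuousLinearMap.mul ℝ ℂ
  have hB (n : ℕ) : ‖B n‖ ≤ K := by
    refine (ContinuousLinearMap.opNorm_smul_le _ _).trans ?_
    rw [ContinuousLinearMap.opNorm_mul, mul_one,
      Real.norm_of_nonneg (triadCoeff_pos hk0 hlam₀ j p q _).le]
    exact hK _ n.cast_add_one_pos.le
  let shift (k : ℤ) : SeqL2 →L[ℝ] SeqL2 :=
    lpExtendComp ℝ 2 activeMode (activeMode.trans (addRightEmbedding k))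
  have shift_apply (k : ℤ) (x : SeqL2) (n : ℕ) : shift k x n =
      modeWeight k0 lam d (n + 1 + k) • ofWeightedCoord k0 lam d x (n + 1 + k) :=
    (lpExtendComp_apply _ _ x n).trans (smul_inv_smul₀ (modeWeight_pos hk0 hlam₀ _).ne' _).symm
  refine ⟨(lpBilin 2 B hB).bilinearComp (shift p) (shift q), fun x y => funext fun n => ?_⟩
  rw [ContinuousLinearMap.bilinearComp_apply, lpBilin_apply, shift_apply, shift_apply]
  exact triadCoeff_smul_mul hk0 hlam₀ j p q _ _ _

lemma exists_contDiff_field (hk0 : 0 < k0) (hlam : 1 ≤ lam) (hd : 1 ≤ d) (a b c : ℝ)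
    {f : ℤ → ℂ} (hf : InV k0 lam d f) :
    ∃ F : SeqL2 → SeqL2, ContDiff ℝ 1 F ∧ ∀ x, F x = weightedCoord k0 lam d
      (f - sB a b c k0 lam (ofWeightedCoord k0 lam d x)) := by
  obtain ⟨Q₁, hQ₁⟩ := exists_weightedTriad hk0 hlam hd 1 2 1
  obtain ⟨Q₂, hQ₂⟩ := exists_weightedTriad hk0 hlam hd 0 1 (-1)
  obtain ⟨Q₃, hQ₃⟩ := exists_weightedTriad hk0 hlam hd (-1) (-1) (-2)
  let g : SeqL2 := ⟨_, ((inV_iff hk0 (zero_lt_one.trans_le hlam)).mp hf).2⟩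
  let conj : SeqL2 ≃L[ℝ] SeqL2 := starL' ℝ
  refine ⟨fun x => g + I • (a • Q₁ x (conj x) + b • Q₂ x (conj x) - c • Q₃ x x), by fun_prop,
    fun x => funext fun n => ?_⟩
  have hconj : ⇑(conj x) = star ⇑x := rfl
  simp only [lp.coeFn_add, lp.coeFn_smul, lp.coeFn_sub, Pi.add_apply, Pi.smul_apply, Pi.sub_apply,
    hQ₁, hQ₂, hQ₃, hconj, g, weightedCoord, ofWeightedCoord_star, sB, sub_eq_add_neg (_ + 1 : ℤ),
    add_zero, Complex.real_smul, Complex.star_def, smul_eq_mul]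
  ring

end VectorField

section Solutions

variable {a b c k0 lam d T : ℝ} {uin f : ℤ → ℂ} {F : SeqL2 → SeqL2}

lemma hasDerivAt_weightedCoord {u : ℝ → ℤ → ℂ} {v : ℤ → ℂ} {t : ℝ}
    (h : ∀ n : ℤ, 1 ≤ n → HasDerivAt (fun s => u s n) (v n) t) (n : ℕ) :
    HasDerivAt (fun s => weightedCoord k0 lam d (u s) n) (weightedCoord k0 lam d v n) t :=
  (h _ (by omega)).const_smul (modeWeight k0 lam d (n + 1))

lemma IsC1Solution.exists_hasDerivAt (hk0 : 0 < k0) (hlam : 0 < lam) (hFc : Continuous F)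
    (hF : ∀ x, F x = weightedCoord k0 lam d
      (f - sB a b c k0 lam (ofWeightedCoord k0 lam d x)))
    {u : ℝ → ℤ → ℂ} (hu : IsC1Solution a b c k0 lam d T uin f u) :
    ∃ x : ℝ → SeqL2, ∀ t ∈ Ioo (-T) T,
      x t = weightedCoord k0 lam d (u t) ∧ HasDerivAt x (F (x t)) t := by
  obtain ⟨-, hu0, hode, -, hcont⟩ := hu
  have lift (t : ℝ) : ∃ y : SeqL2, t ∈ Ioo (-T) T → y = weightedCoord k0 lam d (u t) := by
    by_cases ht : t ∈ Ioo (-T) T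
    · exact ⟨⟨_, ((inV_iff hk0 hlam).mp (hode t ht).1).2⟩, fun _ => rfl⟩
    · exact ⟨0, fun h => absurd h ht⟩
  choose x hx using lift
  have hFx {t : ℝ} (ht : t ∈ Ioo (-T) T) :
      F (x t) = weightedCoord k0 lam d (f - sB a b c k0 lam (u t)) := by
    rw [hF, hx t ht, ofWeightedCoord_weightedCoord hk0 hlam (hu0 t)]
  have coord (t : ℝ) (ht : t ∈ Ioo (-T) T) (n : ℕ) :
      HasDerivAt (fun s => x s n) (F (x t) n) t := by
    rw [hFx ht]
    refine (hasDerivAt_weightedCoord (hode t ht).2 n).congr_of_eventuallyEq ?_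
    filter_upwards [isOpen_Ioo.mem_nhds ht] with s hs
    rw [hx s hs]
  have norm_cont : ContinuousOn (fun t => ‖F (x t)‖) (Ioo (-T) T) := by
    refine hcont.sqrt.congr fun t ht => ?_
    exact (Real.sqrt_sq (norm_nonneg _)).symm.trans
      (congrArg _ (tsum_kk_rpow_eq_norm_sq hk0 hlam (hFx ht)).symm)
  have cont := continuousOn_of_hasDerivAt_apply ENNReal.ofNat_ne_top isOpen_Ioo coord norm_cont
  refine ⟨x, fun t ht => ⟨hx t ht, ?_⟩⟩
  have ht' := isOpen_Ioo.mem_nhds ht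
  exact hasDerivAt_of_hasDerivAt_apply ENNReal.ofNat_ne_top
    (mem_of_superset ht' coord) (hFc.continuousAt.comp (cont.continuousAt ht'))

lemma IsC1Solution.eqOn (hk0 : 0 < k0) (hlam : 0 < lam) (hFc : ContDiff ℝ 1 F)
    (hF : ∀ x, F x = weightedCoord k0 lam d
      (f - sB a b c k0 lam (ofWeightedCoord k0 lam d x)))
    {u v : ℝ → ℤ → ℂ} (hu : IsC1Solution a b c k0 lam d T uin f u)
    (hv : IsC1Solution a b c k0 lam d T uin f v) : EqOn u v (Ioo (-T) T) := by
  obtain ⟨x, hx⟩ := hu.exists_hasDerivAt hk0 hlam hFc.continuous hF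
  obtain ⟨y, hy⟩ := hv.exists_hasDerivAt hk0 hlam hFc.continuous hF
  intro t ht
  have h0 : (0 : ℝ) ∈ Ioo (-T) T := ⟨by linarith [ht.1, ht.2], by linarith [ht.1, ht.2]⟩
  have hxy₀ : x 0 = y 0 := lp.ext <| by
    rw [(hx 0 h0).1, (hy 0 h0).1, funext hu.1, funext hv.1]
  have hxy := eqOn_Ioo_of_hasDerivAt_of_locallyLipschitz hFc.locallyLipschitz h0
    (fun t ht => (hx t ht).2) (fun t ht => (hy t ht).2) hxy₀
  rw [← ofWeightedCoord_weightedCoord (d := d) hk0 hlam (hu.2.1 t), ← (hx t ht).1, hxy ht,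
    (hy t ht).1, ofWeightedCoord_weightedCoord hk0 hlam (hv.2.1 t)]

lemma isC1Solution_ofWeightedCoord (hk0 : 0 < k0) (hlam : 0 < lam) (huin : ∀ n ≤ 0, uin n = 0)
    (hFc : Continuous F)
    (hF : ∀ x, F x = weightedCoord k0 lam d
      (f - sB a b c k0 lam (ofWeightedCoord k0 lam d x)))
    {x : ℝ → SeqL2} (hx0 : x 0 = weightedCoord k0 lam d uin)
    (hx : ∀ t ∈ Ioo (-T) T, HasDerivAt x (F (x t)) t) :
    IsC1Solution a b c k0 lam d T uin f fun t => ofWeightedCoord k0 lam d (x t) := by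
  have coord (y : SeqL2) := (weightedCoord_ofWeightedCoord (d := d) hk0 hlam y).symm
  have cont : ContinuousOn x (Ioo (-T) T) := HasDerivAt.continuousOn hx
  refine ⟨fun n => ?_, fun t n => ofWeightedCoord_of_nonpos _, fun t ht => ⟨?_, fun m hm => ?_⟩,
    ?_, ?_⟩
  · change ofWeightedCoord k0 lam d (x 0) n = uin n
    rw [hx0, ofWeightedCoord_weightedCoord hk0 hlam huin]
  · rw [inV_iff hk0 hlam, ← coord]
    exact ⟨fun n => ofWeightedCoord_of_nonpos _, lp.memℓp (x t)⟩
  · obtain ⟨n, rfl⟩ : ∃ n : ℕ, m = n + 1 := ⟨(m - 1).toNat, by omega⟩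
    have h := ((lp.evalCLM ℝ (fun _ : ℕ => ℂ) 2 n).hasFDerivAt.comp_hasDerivAt t
      (hx t ht)).const_smul (modeWeight k0 lam d (n + 1))⁻¹
    change HasDerivAt _ (_ • F (x t) n) t at h
    rw [hF, weightedCoord, inv_smul_smul₀ (modeWeight_pos hk0 hlam _).ne'] at h
    simp only [ofWeightedCoord_add_one]
    exact h
  · exact (cont.norm.pow 2).congr fun t _ => tsum_kk_rpow_eq_norm_sq hk0 hlam (coord (x t))
  · exact ((hFc.comp_continuousOn cont).norm.pow 2).congr fun t _ =>
      tsum_kk_rpow_eq_norm_sq hk0 hlam (hF (x t))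

end Solutions

theorem sabra_local_existence_uniqueness_general
    (a b c : ℝ) {k0 lam d : ℝ} (hk0 : 0 < k0) (hlam : 1 ≤ lam) (hd : 1 ≤ d) {uin f : ℤ → ℂ}
    (huin : InV k0 lam d uin) (hf : InV k0 lam d f) :
    ∃ T : ℝ, 0 < T ∧
      ∃ u : ℝ → ℤ → ℂ, IsC1Solution a b c k0 lam d T uin f u ∧
        ∀ v : ℝ → ℤ → ℂ, IsC1Solution a b c k0 lam d T uin f v →
          ∀ t ∈ Set.Ioo (-T) T, v t = u t := by
  have hlam₀ : 0 < lam := zero_lt_one.trans_le hlam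
  obtain ⟨F, hFc, hF⟩ := exists_contDiff_field hk0 hlam hd a b c hf
  let x₀ : SeqL2 := ⟨_, ((inV_iff hk0 hlam₀).mp huin).2⟩
  obtain ⟨x, hx0, T, hT, hx⟩ :=
    (hFc.contDiffAt (x := x₀)).exists_forall_mem_closedBall_exists_eq_forall_mem_Ioo_hasDerivAt₀ 0
  rw [zero_sub, zero_add] at hx
  have hu := isC1Solution_ofWeightedCoord hk0 hlam₀ huin.1 hFc.continuous hF
    (congrArg Subtype.val hx0) hx
  exact ⟨T, hT, _, hu, fun v hv t ht => hv.eqOn hk0 hlam₀ hFc hF hu ht⟩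

/-- for `u^{in}, f ∈ V_d`, `d ≥ 1`, there is `T > 0` such that the inviscid
sabra shell model has a unique solution `u ∈ C¹((-T,T), V_d)`. -/
theorem sabra_local_existence_uniqueness
    (a b c k0 lam : ℝ) (hk0 : 0 < k0) (hlam : 1 < lam) (habc : a + b + c = 0)
    (d : ℝ) (hd : 1 ≤ d) (uin f : ℤ → ℂ)
    (huin : InV k0 lam d uin) (hf : InV k0 lam d f) :
    ∃ T : ℝ, 0 < T ∧
      ∃ u : ℝ → ℤ → ℂ, IsC1Solution a b c k0 lam d T uin f u ∧
        ∀ v : ℝ → ℤ → ℂ, IsC1Solution a b c k0 lam d T uin f v →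
          ∀ t ∈ Set.Ioo (-T) T, v t = u t :=
  sabra_local_existence_uniqueness_general a b c hk0 hlam.le hd huin hf
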